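/- Let I and J be operator ideals with {0} ⊊ I ⊊ J ⊊ B(H), and let C₀ be a Cartan subalgebra of J with U_J(H)-conjugacy class O := {W C₀ W* : W ∈ U_J(H)}. Then there exists an uncountable family (C_i)_{i} of elements of O such that the Cartan subalgebras C_i ∩ I of I are pairwise not U_I(H)-conjugate; consequently the set {C ∩ I : C ∈ O} partitions into uncountably many U_I(H)-conjugacy classes of Cartan subalgebras of I. -/

import Mathlib

/-!
An operator ideal which contains a non-compact operator contains an operator bounded below on a
copy of `H`, hence `1`. So `C₀` consists of compact operators, is diagonal in some Hilbert basis
`e`, and by maximality contains the rank-one projections of `e`, which also lie in every nonzero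
ideal.

Let `S₀`, `S₁` be isometries with orthogonal ranges and `S₀S₀*` diagonal, and let `Y = aS₀ + bS₁` be
an isometry with `ab ≠ 0` and `|a|² < 1/2`. Let `u_α` be the Cayley transform of `αT`, where `T ≥ 0`
lies in `J ∖ I`, and let `W_α` act as `u_α` on the range of `Y` and as `1` on its complement. Then
`u_α - u_β` and `T` are multiples of each other when `α ≠ β`, so that `W_α ∈ U_J(H)`, and
`C_α = W_α C₀ W_α*` is the required family.

Indeed, if `V ∈ U_I(H)` conjugates `C_α ∩ I` to `C_β ∩ I`, then every rank-one projection of `e` is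
the conjugate of an element of `C₀` by `U = W_β* V W_α`. So conjugation by `U` preserves diagonality
and `S₁* (U S₀S₀* U*) S₀ = 0`. Modulo `I`, the unitary `U` is `W_β* W_α`, which acts as
`v = u_β* u_α` on the range of `Y`, and the relation becomes
`conj(a) b (v - 1) (1 + |a|² (v - 1))* ∈ I`. The last factor is invertible because `|a|² < 1/2`, so
`v - 1 ∈ I`, whence `u_α - u_β ∈ I` and `T ∈ I`, a contradiction.
-/

open Set

/-- A (two-sided) operator ideal of `B(H)`. -/
def IsOperatorIdeal {H : Type*} [NormedAddCommGroup H] [InnerProductSpace ℂ H]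
    (I : Set (H →L[ℂ] H)) : Prop :=
  (0 : H →L[ℂ] H) ∈ I ∧
  (∀ A B : H →L[ℂ] H, A ∈ I → B ∈ I → A + B ∈ I) ∧
  (∀ (c : ℂ) (A : H →L[ℂ] H), A ∈ I → c • A ∈ I) ∧
  (∀ (T A : H →L[ℂ] H), A ∈ I → T * A ∈ I ∧ A * T ∈ I)

/-- `C` is a self-adjoint complex-linear subspace of `I` consisting of mutually
commuting operators. -/
def IsCommSelfAdjointSubspace {H : Type*} [NormedAddCommGroup H] [InnerProductSpace ℂ H]
    [CompleteSpace H] (I C : Set (H →L[ℂ] H)) : Prop :=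
  C ⊆ I ∧
  (0 : H →L[ℂ] H) ∈ C ∧
  (∀ S T : H →L[ℂ] H, S ∈ C → T ∈ C → S + T ∈ C) ∧
  (∀ (c : ℂ) (T : H →L[ℂ] H), T ∈ C → c • T ∈ C) ∧
  (∀ T ∈ C, star T ∈ C) ∧
  (∀ S T : H →L[ℂ] H, S ∈ C → T ∈ C → S * T = T * S)

/-- `C` is a Cartan subalgebra of the operator ideal `I`. -/
def IsCartanSubalgebra {H : Type*} [NormedAddCommGroup H] [InnerProductSpace ℂ H]
    [CompleteSpace H] (I C : Set (H →L[ℂ] H)) : Prop :=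
  IsCommSelfAdjointSubspace I C ∧
  ∀ C' : Set (H →L[ℂ] H), IsCommSelfAdjointSubspace I C' → C ⊆ C' → C' = C

open scoped InnerProductSpace
open InnerProductSpace Module

section Orthogonality

variable {ι 𝕜 E F : Type*} [RCLike 𝕜] [NormedAddCommGroup E] [InnerProductSpace 𝕜 E]
  [NormedAddCommGroup F]

theorem hilbertBasis_ext [NormedSpace 𝕜 F] (e : HilbertBasis ι 𝕜 E) {A B : E →L[𝕜] F}
    (h : ∀ i, A (e i) = B (e i)) : A = B :=
  ContinuousLinearMap.ext_on
    (Submodule.dense_iff_topologicalClosure_eq_top.2 e.dense_span) (forall_mem_range.2 h)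

theorem hasSum_norm_sq_of_pairwise_inner_eq_zero {v : ι → E} {x : E}
    (horth : Pairwise fun i j => ⟪v i, v j⟫_𝕜 = 0) (hv : HasSum v x) :
    HasSum (fun i => ‖v i‖ ^ 2) (‖x‖ ^ 2) := by
  refine (Filter.Tendsto.pow (Filter.Tendsto.norm hv) 2).congr fun s => ?_
  rw [← RCLike.ofReal_inj (K := 𝕜)]
  push_cast
  simp only [← inner_self_eq_norm_sq_to_K]
  rw [sum_inner]
  refine Finset.sum_congr rfl fun i hi => ?_
  rw [inner_sum, Finset.sum_eq_single_of_mem i hi fun j _ hji => horth hji.symm]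

theorem mul_norm_le_norm_of_pairwise_inner_eq_zero [InnerProductSpace 𝕜 F]
    (e : HilbertBasis ι 𝕜 E) {A : E →L[𝕜] F} {ε : ℝ} (hε : 0 ≤ ε)
    (horth : Pairwise fun i j => ⟪A (e i), A (e j)⟫_𝕜 = 0) (hA : ∀ i, ε ≤ ‖A (e i)‖) (x : E) :
    ε * ‖x‖ ≤ ‖A x‖ := by
  set c := e.repr x
  have hx : HasSum (fun i => ‖c i • e i‖ ^ 2) (‖x‖ ^ 2) :=
    hasSum_norm_sq_of_pairwise_inner_eq_zero (𝕜 := 𝕜)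
      (fun i j hij => by simp [inner_smul_left, inner_smul_right, e.orthonormal.2 hij])
      (e.hasSum_repr x)
  have hAx : HasSum (fun i => ‖c i • A (e i)‖ ^ 2) (‖A x‖ ^ 2) :=
    hasSum_norm_sq_of_pairwise_inner_eq_zero (𝕜 := 𝕜)
      (fun i j hij => by simp [inner_smul_left, inner_smul_right, horth hij])
      (by simpa only [map_smul] using A.hasSum (e.hasSum_repr x))
  refine (sq_le_sq₀ (by positivity) (norm_nonneg _)).1 ?_
  rw [mul_pow]
  refine hasSum_le (fun i => ?_) (hx.mul_left (ε ^ 2)) hAx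
  rw [← mul_pow, norm_smul, norm_smul, e.orthonormal.1 i, mul_one, mul_comm]
  gcongr
  exact hA i

theorem exists_isometry_apply_eq [InnerProductSpace 𝕜 F] [CompleteSpace F]
    (e : HilbertBasis ι 𝕜 E) {x : ι → F} (hx : Orthonormal 𝕜 x) :
    ∃ S : E →ₗᵢ[𝕜] F, ∀ i, S (e i) = x i := by
  classical
  refine ⟨hx.orthogonalFamily.linearIsometry.comp e.repr.toLinearIsometry, fun i => ?_⟩
  simp [e.repr_self, OrthogonalFamily.linearIsometry_apply_single]

end Orthogonality

section Factorization

/-- Douglas factorization: `A x ↦ B x` is well defined and bounded on the range of `A`, so it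
extends to the closure of the range, and then to `F` through the orthogonal projection. -/
theorem exists_eq_comp_of_norm_le {𝕜 E F G : Type*} [RCLike 𝕜]
    [NormedAddCommGroup E] [NormedSpace 𝕜 E]
    [NormedAddCommGroup F] [InnerProductSpace 𝕜 F] [CompleteSpace F]
    [NormedAddCommGroup G] [NormedSpace 𝕜 G] [CompleteSpace G]
    {A : E →L[𝕜] F} {B : E →L[𝕜] G} {c : ℝ} (h : ∀ x, ‖B x‖ ≤ c * ‖A x‖) :
    ∃ V : F →L[𝕜] G, B = V ∘L A := by
  let K := A.range.topologicalClosure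
  have : CompleteSpace K := A.range.isClosed_topologicalClosure.completeSpace_coe
  let A' : E →ₗ[𝕜] K :=
    Submodule.inclusion A.range.le_topologicalClosure ∘ₗ A.toLinearMap.rangeRestrict
  have hA' : DenseRange A' :=
    ((denseRange_inclusion_iff A.range.le_topologicalClosure).2 subset_rfl).comp
      A.toLinearMap.surjective_rangeRestrict.denseRange
      (continuous_inclusion A.range.le_topologicalClosure)
  refine ⟨B.toLinearMap.extendOfNorm A' ∘L K.orthogonalProjectionOnto, ?_⟩
  ext x
  have hproj : K.orthogonalProjectionOnto (A x) = A' x :=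
    Submodule.orthogonalProjectionOnto_mem_subspace_eq_self (A' x)
  rw [ContinuousLinearMap.comp_apply, ContinuousLinearMap.comp_apply, hproj,
    LinearMap.extendOfNorm_eq hA' ⟨c, h⟩, ContinuousLinearMap.coe_coe]

theorem norm_cfcAbs_apply {H : Type*} [NormedAddCommGroup H] [InnerProductSpace ℂ H]
    [CompleteSpace H] (T : H →L[ℂ] H) (x : H) : ‖CFC.abs T x‖ = ‖T x‖ := by
  have h : star (CFC.abs T) * CFC.abs T = star T * T := by
    rw [(CFC.abs_nonneg T).isSelfAdjoint.star_eq, CFC.abs_mul_abs]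
  rw [ContinuousLinearMap.apply_norm_eq_sqrt_inner_adjoint_left,
    ContinuousLinearMap.apply_norm_eq_sqrt_inner_adjoint_left]
  exact congrArg (fun S : H →L[ℂ] H => √(RCLike.re ⟪S x, x⟫_ℂ)) h

end Factorization

section Ideals

variable {H : Type*} [NormedAddCommGroup H] [InnerProductSpace ℂ H] {I : Set (H →L[ℂ] H)}
  {A B : H →L[ℂ] H}

namespace IsOperatorIdeal

theorem add_mem (hI : IsOperatorIdeal I) (hA : A ∈ I) (hB : B ∈ I) : A + B ∈ I :=
  hI.2.1 A B hA hB

theorem smul_mem (hI : IsOperatorIdeal I) (c : ℂ) (hA : A ∈ I) : c • A ∈ I :=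
  hI.2.2.1 c A hA

theorem mul_mem_left (hI : IsOperatorIdeal I) (B : H →L[ℂ] H) (hA : A ∈ I) : B * A ∈ I :=
  (hI.2.2.2 B A hA).1

theorem mul_mem_right (hI : IsOperatorIdeal I) (B : H →L[ℂ] H) (hA : A ∈ I) : A * B ∈ I :=
  (hI.2.2.2 B A hA).2

theorem sub_mem (hI : IsOperatorIdeal I) (hA : A ∈ I) (hB : B ∈ I) : A - B ∈ I := by
  simpa [sub_eq_add_neg] using hI.add_mem hA (hI.smul_mem (-1) hB)

theorem mul_sub_mul_mem (hI : IsOperatorIdeal I) {A A' B B' : H →L[ℂ] H} (hA : A - A' ∈ I)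
    (hB : B - B' ∈ I) : A * B - A' * B' ∈ I := by
  have h : A * B - A' * B' = (A - A') * B + A' * (B - B') := by noncomm_ring
  rw [h]
  exact hI.add_mem (hI.mul_mem_right _ hA) (hI.mul_mem_left _ hB)

theorem rankOne_mem (hI : IsOperatorIdeal I) (hne : ∃ T ∈ I, T ≠ 0) (v w : H) :
    rankOne ℂ v w ∈ I := by
  obtain ⟨T, hT, hT0⟩ := hne
  obtain ⟨x, hx⟩ : ∃ x, T x ≠ 0 := DFunLike.ne_iff.1 hT0
  have hxx : ⟪T x, T x⟫_ℂ ≠ 0 := inner_self_ne_zero.2 hx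
  have hfactor :
      rankOne ℂ v w = (⟪T x, T x⟫_ℂ)⁻¹ • (rankOne ℂ v (T x) * (T * rankOne ℂ x w)) := by
    ext y
    simp only [_root_.smul_apply, mul_apply_eq_comp, rankOne_apply, map_smul, smul_smul]
    congr 1
    field_simp
  rw [hfactor]
  exact hI.smul_mem _ (hI.mul_mem_left _ (hI.mul_mem_right _ hT))

variable [CompleteSpace H]

theorem mem_of_norm_le (hI : IsOperatorIdeal I) (hA : A ∈ I) {c : ℝ}
    (h : ∀ x, ‖B x‖ ≤ c * ‖A x‖) : B ∈ I := by
  obtain ⟨V, rfl⟩ := exists_eq_comp_of_norm_le h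
  exact hI.mul_mem_left V hA

theorem cfcAbs_mem_iff (hI : IsOperatorIdeal I) : CFC.abs A ∈ I ↔ A ∈ I :=
  ⟨fun h => hI.mem_of_norm_le (c := 1) h fun x => by rw [norm_cfcAbs_apply, one_mul],
    fun h => hI.mem_of_norm_le (c := 1) h fun x => by rw [norm_cfcAbs_apply, one_mul]⟩

theorem star_mem (hI : IsOperatorIdeal I) (hA : A ∈ I) : star A ∈ I := by
  obtain ⟨V, hV⟩ := exists_eq_comp_of_norm_le (A := CFC.abs A) (B := A) (c := 1)
    fun x => by rw [norm_cfcAbs_apply, one_mul]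
  have hstar : star A = CFC.abs A * star V := by
    conv_lhs => rw [hV]
    exact (star_mul V _).trans (by rw [(CFC.abs_nonneg A).isSelfAdjoint.star_eq])
  rw [hstar]
  exact hI.mul_mem_right _ (hI.cfcAbs_mem_iff.2 hA)

end IsOperatorIdeal

end Ideals

section Compactness

variable {𝕜 E F : Type*} [RCLike 𝕜] [NormedAddCommGroup E] [InnerProductSpace 𝕜 E]
  [NormedAddCommGroup F]

theorem isCompactOperator_starProjection (K : Submodule 𝕜 E) [FiniteDimensional 𝕜 K] :
    IsCompactOperator K.starProjection := by
  have : ProperSpace K := FiniteDimensional.proper 𝕜 K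
  exact (isCompactOperator_of_locallyCompactSpace_dom K.orthogonalProjectionOnto).clm_comp
    K.subtypeL

theorem norm_sub_comp_starProjection_le [NormedSpace 𝕜 F] {T : E →L[𝕜] F} {K : Submodule 𝕜 E}
    [K.HasOrthogonalProjection] {ε : ℝ} (hε : 0 ≤ ε) (h : ∀ x ∈ Kᗮ, ‖T x‖ ≤ ε * ‖x‖) :
    ‖T - T ∘L K.starProjection‖ ≤ ε := by
  refine ContinuousLinearMap.opNorm_le_bound _ hε fun x => ?_
  calc ‖(T - T ∘L K.starProjection) x‖ = ‖T (Kᗮ.starProjection x)‖ := by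
        simp [K.starProjection_orthogonal_val x]
    _ ≤ ε * ‖Kᗮ.starProjection x‖ := h _ (Kᗮ.starProjection_apply_mem x)
    _ ≤ ε * ‖x‖ := by gcongr; exact Kᗮ.norm_starProjection_apply_le x

theorem exists_forall_exists_le_norm_of_not_isCompactOperator [NormedSpace 𝕜 F] [CompleteSpace F]
    {T : E →L[𝕜] F} (hT : ¬ IsCompactOperator T) :
    ∃ ε > 0, ∀ K : Submodule 𝕜 E, FiniteDimensional 𝕜 K → ∃ x ∈ Kᗮ, ‖x‖ = 1 ∧ ε ≤ ‖T x‖ := by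
  contrapose! hT
  change T ∈ {G : E →L[𝕜] F | IsCompactOperator G}
  rw [← isClosed_setOfPred_isCompactOperator.closure_eq, Metric.mem_closure_iff]
  intro ε hε
  obtain ⟨K, hK, hlt⟩ := hT (ε / 2) (half_pos hε)
  refine ⟨T ∘L K.starProjection, (isCompactOperator_starProjection K).clm_comp T, ?_⟩
  rw [dist_eq_norm]
  refine (norm_sub_comp_starProjection_le (half_pos hε).le fun x hx => ?_).trans_lt
    (half_lt_self hε)
  rcases eq_or_ne x 0 with rfl | hx0
  · simp
  have hx' := hlt ((‖x‖⁻¹ : 𝕜) • x) (Kᗮ.smul_mem _ hx) (norm_smul_inv_norm hx0)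
  rw [map_smul, norm_smul, norm_inv, RCLike.norm_ofReal, abs_norm,
    inv_mul_lt_iff₀ (norm_pos_iff.2 hx0), mul_comm] at hx'
  exact hx'.le

theorem exists_orthonormal_seq_of_not_isCompactOperator [CompleteSpace E] [InnerProductSpace 𝕜 F]
    [CompleteSpace F] {T : E →L[𝕜] F} (hT : ¬ IsCompactOperator T) :
    ∃ ε > 0, ∃ x : ℕ → E, Orthonormal 𝕜 x ∧ (Pairwise fun m n => ⟪T (x m), T (x n)⟫_𝕜 = 0) ∧
      ∀ n, ε ≤ ‖T (x n)‖ := by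
  classical
  obtain ⟨ε, hε, hK⟩ := exists_forall_exists_le_norm_of_not_isCompactOperator hT
  have : Std.Symm fun x y : E => ⟪x, y⟫_𝕜 = 0 ∧ ⟪T x, T y⟫_𝕜 = 0 :=
    ⟨fun _ _ h => h.imp inner_eq_zero_symm.1 inner_eq_zero_symm.1⟩
  obtain ⟨x, hx, horth⟩ := exists_seq_of_forall_finset_exists'
    (fun x : E => ‖x‖ = 1 ∧ ε ≤ ‖T x‖) (fun x y => ⟪x, y⟫_𝕜 = 0 ∧ ⟪T x, T y⟫_𝕜 = 0) (by
      intro s _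
      -- `⟪T x, T y⟫ = ⟪T†T x, y⟫`, so finitely many linear conditions on `y` suffice
      obtain ⟨y, hy, hy'⟩ := hK (Submodule.span 𝕜 (s ∪ s.image (T.adjoint ∘L T) : Finset E))
        (FiniteDimensional.span_finset 𝕜 _)
      refine ⟨y, hy', fun x hx => ⟨?_, ?_⟩⟩
      · exact hy x (Submodule.subset_span (by simp [hx]))
      · rw [← ContinuousLinearMap.adjoint_inner_left]
        exact hy _ (Submodule.subset_span (by simpa using Or.inr ⟨x, hx, rfl⟩)))
  exact ⟨ε, hε, x, ⟨fun n => (hx n).1, fun _ _ hmn => (horth hmn).1⟩,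
    fun _ _ hmn => (horth hmn).2, fun n => (hx n).2⟩

theorem IsOperatorIdeal.isCompactOperator {H : Type*} [NormedAddCommGroup H]
    [InnerProductSpace ℂ H] [CompleteSpace H] (b : HilbertBasis ℕ ℂ H) {J : Set (H →L[ℂ] H)}
    (hJ : IsOperatorIdeal J) (hJproper : ∃ T, T ∉ J) {T : H →L[ℂ] H} (hT : T ∈ J) :
    IsCompactOperator T := by
  by_contra hnc
  obtain ⟨ε, hε, x, hx, horth, hTx⟩ := exists_orthonormal_seq_of_not_isCompactOperator hnc
  obtain ⟨S, hS⟩ := exists_isometry_apply_eq b hx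
  let A : H →L[ℂ] H := T * S.toContinuousLinearMap
  have hA (n : ℕ) : A (b n) = T (x n) := congrArg T (hS n)
  have hbelow := mul_norm_le_norm_of_pairwise_inner_eq_zero b (A := A) hε.le
    (by simpa only [hA] using horth) (by simpa only [hA] using hTx)
  have h1 : (1 : H →L[ℂ] H) ∈ J :=
    hJ.mem_of_norm_le (A := A) (c := ε⁻¹) (hJ.mul_mem_right _ hT) fun x => by
      rw [le_inv_mul_iff₀ hε]
      exact hbelow x
  obtain ⟨R, hR⟩ := hJproper
  exact hR (by simpa using hJ.mul_mem_left R h1)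

end Compactness

section JointDiagonalization

theorem map_iInf_eigenspace_restrict_le {n R M : Type*} [CommRing R] [AddCommGroup M] [Module R M]
    (T : n → End R M) {V : Submodule R M} (hV : ∀ i, MapsTo (T i) V V) (χ : n → R) :
    (⨅ i, End.eigenspace ((T i).restrict (hV i)) (χ i)).map V.subtype ≤
      ⨅ i, End.eigenspace (T i) (χ i) :=
  le_iInf fun i => (Submodule.map_mono (iInf_le _ i)).trans
    (End.eigenspace_restrict_le_eigenspace (T i) (hV i) (χ i))

variable {ι n 𝕜 E : Type*} [RCLike 𝕜] [NormedAddCommGroup E] [InnerProductSpace 𝕜 E]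
  [CompleteSpace E]

/-- Unless all `T i` vanish, one of them has a nonzero eigenvalue. The corresponding eigenspace is
finite-dimensional and invariant under the whole family. -/
theorem exists_iInf_eigenspace_ne_bot [Nontrivial E] {T : n → E →L[𝕜] E}
    (hcpt : ∀ i, IsCompactOperator (T i)) (hsymm : ∀ i, (T i).IsSymmetric)
    (hcomm : ∀ i j, Commute (T i).toLinearMap (T j).toLinearMap) :
    ∃ χ : n → 𝕜, ⨅ i, End.eigenspace (T i).toLinearMap (χ i) ≠ ⊥ := by
  by_cases hzero : ∀ i, T i = 0
  · exact ⟨0, by simp [hzero]⟩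
  push Not at hzero
  obtain ⟨j, hj⟩ := hzero
  obtain ⟨μ, hμ, hμ0⟩ : ∃ μ, End.HasEigenvalue (T j).toLinearMap μ ∧ μ ≠ 0 := by
    by_contra! h
    exact hj ((ContinuousLinearMap.eq_zero_of_forall_hasEigenvalue_eq_zero (hcpt j) (hsymm j)).1 h)
  let V := End.eigenspace (T j).toLinearMap μ
  have : FiniteDimensional 𝕜 V := (T j).finite_dimensional_eigenspace (hcpt j) μ hμ0
  have : Nontrivial V := Submodule.nontrivial_iff_ne_bot.2 hμ
  have hV (i : n) : MapsTo (T i).toLinearMap V V :=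
    End.mapsTo_genEigenspace_of_comm (hcomm j i) μ 1
  have htop := LinearMap.IsSymmetric.iSup_iInf_eq_top_of_commute
    (fun i => (hsymm i).restrict_invariant (hV i))
    fun i k _ => LinearMap.restrict_commute (hcomm i k) (hV i) (hV k)
  obtain ⟨χ, hχ⟩ : ∃ χ : n → 𝕜,
      ⨅ i, End.eigenspace ((T i).toLinearMap.restrict (hV i)) (χ i) ≠ ⊥ := by
    by_contra! h
    simp [h] at htop
  have hle := map_iInf_eigenspace_restrict_le (fun i => (T i).toLinearMap) hV χ
  obtain ⟨v, hv, hv0⟩ := Submodule.exists_mem_ne_zero_of_ne_bot hχ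
  exact ⟨χ, (Submodule.ne_bot_iff _).2 ⟨v, hle ⟨v, hv, rfl⟩, by simpa using hv0⟩⟩

theorem orthogonal_iSup_iInf_eigenspace_eq_bot {T : n → E →L[𝕜] E}
    (hcpt : ∀ i, IsCompactOperator (T i)) (hsymm : ∀ i, (T i).IsSymmetric)
    (hcomm : ∀ i j, Commute (T i).toLinearMap (T j).toLinearMap) :
    (⨆ χ : n → 𝕜, ⨅ i, End.eigenspace (T i).toLinearMap (χ i))ᗮ = ⊥ := by
  set M := ⨆ χ : n → 𝕜, ⨅ i, End.eigenspace (T i).toLinearMap (χ i)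
  have hM (i : n) : M ∈ End.invtSubmodule (T i).toLinearMap := by
    refine (End.mem_invtSubmodule _).2 (iSup_le fun χ x hx => ?_)
    change T i x ∈ M
    have hx' := End.mem_eigenspace_iff.1 ((Submodule.mem_iInf _).1 hx i)
    rw [ContinuousLinearMap.coe_coe] at hx'
    rw [hx']
    exact M.smul_mem _ (Submodule.mem_iSup_of_mem χ hx)
  have hM' (i : n) : MapsTo (T i).toLinearMap Mᗮ Mᗮ :=
    (hsymm i).orthogonalComplement_mem_invtSubmodule (hM i)
  by_contra hbot
  have : Nontrivial Mᗮ := Submodule.nontrivial_iff_ne_bot.2 hbot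
  obtain ⟨χ, hχ⟩ := exists_iInf_eigenspace_ne_bot (T := fun i => (T i).restrict (hM' i))
    (fun i => (hcpt i).restrict' (hM' i)) (fun i => (hsymm i).restrict_invariant (hM' i))
    fun i k => LinearMap.restrict_commute (hcomm i k) (hM' i) (hM' k)
  have hle := map_iInf_eigenspace_restrict_le (fun i => (T i).toLinearMap) hM' χ
  obtain ⟨v, hv, hv0⟩ := Submodule.exists_mem_ne_zero_of_ne_bot hχ
  have hvM : (v : E) ∈ M := Submodule.mem_iSup_of_mem χ (hle ⟨v, hv, rfl⟩)
  exact hv0 (Subtype.ext (Submodule.disjoint_def.1 M.orthogonal_disjoint v hvM v.2))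

theorem exists_hilbertBasis_forall_mem {V : ι → Submodule 𝕜 E} [∀ i, CompleteSpace (V i)]
    (hV : OrthogonalFamily 𝕜 (fun i => V i) fun i => (V i).subtypeₗᵢ) (hbot : (⨆ i, V i)ᗮ = ⊥) :
    ∃ (s : Set E) (e : HilbertBasis s 𝕜 E), ∀ k, ∃ i, e k ∈ V i := by
  choose s v _ using fun i => exists_hilbertBasis 𝕜 (V i)
  let w (a : Σ i, s i) : E := (v a.1 a.2 : V a.1)
  have hw : Orthonormal 𝕜 w := hV.orthonormal_sigma_orthonormal fun i => (v i).orthonormal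
  have hdense : (Submodule.span 𝕜 (range w))ᗮ = ⊥ := by
    refine eq_bot_mono (fun x hx => ?_) hbot
    rw [← Submodule.iInf_orthogonal, Submodule.mem_iInf]
    intro i
    rw [← Submodule.orthogonalProjectionOnto_eq_zero_iff]
    refine (v i).repr.injective (lp.ext (funext fun k => ?_))
    rw [(v i).repr_apply_apply, Submodule.inner_orthogonalProjectionOnto_eq_of_mem_left, map_zero]
    exact hx _ (Submodule.subset_span ⟨⟨i, k⟩, rfl⟩)
  refine ⟨range w, HilbertBasis.mkOfOrthogonalEqBot hw.toSubtypeRange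
    (by rwa [Subtype.range_coe]), ?_⟩
  rintro ⟨_, a, rfl⟩
  exact ⟨a.1, by simp [w]⟩

theorem exists_hilbertBasis_forall_apply_eq_smul {T : n → E →L[𝕜] E}
    (hcpt : ∀ i, IsCompactOperator (T i)) (hsymm : ∀ i, (T i).IsSymmetric)
    (hcomm : ∀ i j, Commute (T i).toLinearMap (T j).toLinearMap) :
    ∃ (s : Set E) (e : HilbertBasis s 𝕜 E), ∀ k i, ∃ μ : 𝕜, T i (e k) = μ • e k := by
  have hclosed (χ : n → 𝕜) :
      IsClosed ((⨅ i, End.eigenspace (T i).toLinearMap (χ i) : Submodule 𝕜 E) : Set E) := by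
    rw [Submodule.coe_iInf]
    exact isClosed_iInter fun i => (T i).isClosed_eigenspace _
  have (χ : n → 𝕜) : CompleteSpace ↥(⨅ i, End.eigenspace (T i).toLinearMap (χ i)) :=
    (hclosed χ).completeSpace_coe
  obtain ⟨s, e, he⟩ := exists_hilbertBasis_forall_mem
    (LinearMap.IsSymmetric.orthogonalFamily_iInf_eigenspaces hsymm)
    (orthogonal_iSup_iInf_eigenspace_eq_bot hcpt hsymm hcomm)
  refine ⟨s, e, fun k i => ?_⟩
  obtain ⟨χ, hχ⟩ := he k
  exact ⟨χ i, End.mem_eigenspace_iff.1 ((Submodule.mem_iInf _).1 hχ i)⟩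

end JointDiagonalization

section Diagonal

variable {ι 𝕜 E : Type*} [RCLike 𝕜] [NormedAddCommGroup E] [InnerProductSpace 𝕜 E]

/-- `A` is diagonal with respect to the Hilbert basis `e`, that is, every basis vector is an
eigenvector of `A`. The diagonal operators form a maximal commutative self-adjoint algebra, in which
the Cartan subalgebras with eigenbasis `e` are contained. -/
def IsDiag (e : HilbertBasis ι 𝕜 E) (A : E →L[𝕜] E) : Prop :=
  ∀ i, ∃ μ : 𝕜, A (e i) = μ • e i

theorem IsDiag.commute {e : HilbertBasis ι 𝕜 E} {A B : E →L[𝕜] E} (hA : IsDiag e A)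
    (hB : IsDiag e B) : Commute A B := by
  refine hilbertBasis_ext e fun i => ?_
  obtain ⟨a, ha⟩ := hA i
  obtain ⟨c, hc⟩ := hB i
  simp only [mul_apply_eq_comp, ha, hc, map_smul]
  rw [smul_comm]

theorem isDiag_rankOne (e : HilbertBasis ι 𝕜 E) (i : ι) : IsDiag e (rankOne 𝕜 (e i) (e i)) := by
  intro j
  rcases eq_or_ne i j with rfl | h
  · exact ⟨_, rankOne_apply _ _ _⟩
  · exact ⟨0, by rw [rankOne_apply, e.orthonormal.2 h, zero_smul, zero_smul]⟩

theorem isDiag_of_commute_rankOne {e : HilbertBasis ι 𝕜 E} {A : E →L[𝕜] E}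
    (h : ∀ i, Commute A (rankOne 𝕜 (e i) (e i))) : IsDiag e A := by
  intro i
  have hi : A (rankOne 𝕜 (e i) (e i) (e i)) = rankOne 𝕜 (e i) (e i) (A (e i)) :=
    DFunLike.congr_fun (h i).eq (e i)
  rw [rankOne_apply, rankOne_apply, inner_self_eq_norm_sq_to_K, e.orthonormal.1 i] at hi
  exact ⟨_, by simpa using hi⟩

theorem IsDiag.conj_of_rankOne_mem [CompleteSpace E] {e : HilbertBasis ι 𝕜 E}
    {C : Set (E →L[𝕜] E)} {U D : E →L[𝕜] E} (hC : ∀ A ∈ C, IsDiag e A) (hU : star U * U = 1)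
    (h : ∀ i, ∃ A ∈ C, U * A * star U = rankOne 𝕜 (e i) (e i)) (hD : IsDiag e D) :
    IsDiag e (U * D * star U) := by
  have hmul (A B : E →L[𝕜] E) : U * A * star U * (U * B * star U) = U * (A * B) * star U := by
    calc U * A * star U * (U * B * star U) = U * A * (star U * U) * B * star U := by
          simp only [mul_assoc]
      _ = U * (A * B) * star U := by rw [hU, mul_one]; simp only [mul_assoc]
  refine isDiag_of_commute_rankOne fun i => ?_
  obtain ⟨A, hA, hAi⟩ := h i
  rw [← hAi, Commute, SemiconjBy, hmul, hmul, (hD.commute (hC A hA)).eq]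

theorem infinite_of_hilbertBasis {κ : Type*} [Infinite ι] (b : HilbertBasis ι 𝕜 E)
    (e : HilbertBasis κ 𝕜 E) : Infinite κ := by
  by_contra hκ
  have : Finite κ := not_infinite_iff_finite.1 hκ
  have := Fintype.ofFinite κ
  have : FiniteDimensional 𝕜 E := e.toOrthonormalBasis.toBasis.finiteDimensional_of_finite
  exact not_finite_iff_infinite.2 ‹_› b.orthonormal.linearIndependent.finite

theorem exists_isometries_isDiag [Infinite ι] [CompleteSpace E] (e : HilbertBasis ι 𝕜 E) :
    ∃ S₀ S₁ : E →L[𝕜] E, star S₀ * S₀ = 1 ∧ star S₁ * S₁ = 1 ∧ star S₁ * S₀ = 0 ∧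
      IsDiag e (S₀ * star S₀) := by
  obtain ⟨f⟩ : Nonempty (ι ⊕ ι ≃ ι) := Cardinal.eq.1 (by simp)
  obtain ⟨S₀, hS₀⟩ := exists_isometry_apply_eq e
    (e.orthonormal.comp (f ∘ Sum.inl) (f.injective.comp Sum.inl_injective))
  obtain ⟨S₁, hS₁⟩ := exists_isometry_apply_eq e
    (e.orthonormal.comp (f ∘ Sum.inr) (f.injective.comp Sum.inr_injective))
  let T₀ := S₀.toContinuousLinearMap
  let T₁ := S₁.toContinuousLinearMap
  have h₀ : star T₀ * T₀ = 1 :=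
    (ContinuousLinearMap.norm_map_iff_adjoint_comp_self T₀).1 S₀.norm_map
  have h₁ : star T₁ * T₁ = 1 :=
    (ContinuousLinearMap.norm_map_iff_adjoint_comp_self T₁).1 S₁.norm_map
  have h₁₀ : star T₁ * T₀ = 0 := by
    refine hilbertBasis_ext e fun i => e.repr.injective (lp.ext (funext fun j => ?_))
    rw [e.repr_apply_apply, e.repr_apply_apply, mul_apply_eq_comp,
      ContinuousLinearMap.star_eq_adjoint, ContinuousLinearMap.adjoint_inner_right]
    simpa [T₀, T₁, hS₀, hS₁] using e.orthonormal.2 (by simp : f (.inr j) ≠ f (.inl i))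
  have h₀₁ : star T₀ * T₁ = 0 := by simpa using congrArg star h₁₀
  refine ⟨T₀, T₁, h₀, h₁, h₁₀, fun i => ?_⟩
  obtain ⟨k | k, rfl⟩ := f.surjective i
  · have hk : (T₀ * star T₀ * T₀) (e k) = T₀ (e k) := by rw [mul_assoc, h₀, mul_one]
    exact ⟨1, by simpa [T₀, hS₀] using hk⟩
  · have hk : (T₀ * star T₀ * T₁) (e k) = 0 := by rw [mul_assoc, h₀₁, mul_zero]; rfl
    exact ⟨0, by simpa [T₁, hS₁] using hk⟩

end Diagonal

section Cartan

variable {H : Type*} [NormedAddCommGroup H] [InnerProductSpace ℂ H] [CompleteSpace H]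
  {J C : Set (H →L[ℂ] H)}

namespace IsCartanSubalgebra

/-- The joint eigenbasis theorem is applied to the real and imaginary parts of the elements of
`C`. -/
theorem exists_isDiag (hC : IsCartanSubalgebra J C) (hJ : ∀ T ∈ J, IsCompactOperator T) :
    ∃ (s : Set H) (e : HilbertBasis s ℂ H), ∀ A ∈ C, IsDiag e A := by
  obtain ⟨⟨hCJ, -, hadd, hsmul, hstar, hcomm⟩, -⟩ := hC
  obtain ⟨s, e, he⟩ := exists_hilbertBasis_forall_apply_eq_smul
    (T := fun A : {A // A ∈ C ∧ IsSelfAdjoint A} => A.1) (fun A => hJ _ (hCJ A.2.1))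
    (fun A => A.2.2.isSymmetric)
    (fun A B => congrArg ContinuousLinearMap.toLinearMap (hcomm A B A.2.1 B.2.1))
  refine ⟨s, e, fun A hA k => ?_⟩
  have hre {A : H →L[ℂ] H} (hA : A ∈ C) : (realPart A : H →L[ℂ] H) ∈ C := by
    rw [realPart_apply_coe, ← Complex.coe_smul]
    exact hsmul _ _ (hadd _ _ hA (hstar A hA))
  have him : (imaginaryPart A : H →L[ℂ] H) ∈ C := by
    simpa using hre (hsmul (-Complex.I) A hA)
  obtain ⟨μ, hμ⟩ := he k ⟨_, hre hA, (realPart A).2⟩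
  obtain ⟨ν, hν⟩ := he k ⟨_, him, (imaginaryPart A).2⟩
  refine ⟨μ + Complex.I * ν, ?_⟩
  conv_lhs => rw [← realPart_add_I_smul_imaginaryPart A]
  rw [_root_.add_apply, _root_.smul_apply, hμ, hν]
  module

/-- By maximality, adjoining `P` to `C` does not enlarge `C`. -/
theorem mem_of_commute (hC : IsCartanSubalgebra J C) (hJ : IsOperatorIdeal J) {P : H →L[ℂ] H}
    (hP : P ∈ J) (hPsa : IsSelfAdjoint P) (hPC : ∀ A ∈ C, Commute A P) : P ∈ C := by
  obtain ⟨⟨hCJ, hzero, hadd, hsmul, hstar, hcomm⟩, hmax⟩ := hC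
  have hC' : IsCommSelfAdjointSubspace J {X | ∃ A ∈ C, ∃ c : ℂ, X = A + c • P} := by
    refine ⟨?_, ⟨0, hzero, 0, by simp⟩, ?_, ?_, ?_, ?_⟩
    · rintro X ⟨A, hA, c, rfl⟩
      exact hJ.add_mem (hCJ hA) (hJ.smul_mem _ hP)
    · rintro _ _ ⟨A, hA, c, rfl⟩ ⟨B, hB, d, rfl⟩
      exact ⟨A + B, hadd _ _ hA hB, c + d, by module⟩
    · rintro k _ ⟨A, hA, c, rfl⟩
      exact ⟨k • A, hsmul _ _ hA, k * c, by module⟩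
    · rintro _ ⟨A, hA, c, rfl⟩
      exact ⟨star A, hstar A hA, star c, by rw [star_add, star_smul, hPsa.star_eq]⟩
    · rintro _ _ ⟨A, hA, c, rfl⟩ ⟨B, hB, d, rfl⟩
      simp only [add_mul, mul_add, smul_mul_assoc, mul_smul_comm, hcomm A B hA hB, (hPC A hA).eq,
        (hPC B hB).eq, smul_add, smul_comm c d]
      abel
  rw [← hmax _ hC' fun A hA => ⟨A, hA, 0, by simp⟩]
  exact ⟨0, hzero, 1, by simp⟩

theorem rankOne_mem (hC : IsCartanSubalgebra J C) (hJ : IsOperatorIdeal J) (hne : ∃ T ∈ J, T ≠ 0)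
    {ι : Type*} {e : HilbertBasis ι ℂ H} (hdiag : ∀ A ∈ C, IsDiag e A) (i : ι) :
    rankOne ℂ (e i) (e i) ∈ C :=
  hC.mem_of_commute hJ (hJ.rankOne_mem hne _ _)
    (isStarProjection_rankOne_self (e.orthonormal.1 i)).isSelfAdjoint
    fun A hA => (hdiag A hA).commute (isDiag_rankOne e i)

end IsCartanSubalgebra

end Cartan

section Unitaries

/-- For an isometry `Y`, this is the operator acting as `u` on the range of `Y`, identified with the
domain through `Y`, and as the identity on its orthogonal complement. It embeds the unitaries of a
corner into the unitaries of the whole algebra. -/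
def extendByOne {R : Type*} [Ring R] [StarRing R] (Y u : R) : R :=
  1 + Y * (u - 1) * star Y

section ExtendByOne

variable {R : Type*} [Ring R] [StarRing R] {Y : R}

theorem star_extendByOne (Y u : R) : star (extendByOne Y u) = extendByOne Y (star u) := by
  simp only [extendByOne, star_add, star_mul, star_star, star_sub, star_one, mul_assoc]

theorem extendByOne_mul_extendByOne (hY : star Y * Y = 1) (u v : R) :
    extendByOne Y u * extendByOne Y v = extendByOne Y (u * v) := by
  have hmul : Y * (u - 1) * star Y * (Y * (v - 1) * star Y) =
      Y * ((u - 1) * (v - 1)) * star Y := by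
    calc Y * (u - 1) * star Y * (Y * (v - 1) * star Y)
        = Y * (u - 1) * (star Y * Y) * (v - 1) * star Y := by simp only [mul_assoc]
      _ = Y * ((u - 1) * (v - 1)) * star Y := by rw [hY, mul_one]; simp only [mul_assoc]
  simp only [extendByOne, add_mul, mul_add, hmul, one_mul, mul_one]
  noncomm_ring

theorem extendByOne_mem_unitary (hY : star Y * Y = 1) {u : R} (hu : u ∈ unitary R) :
    extendByOne Y u ∈ unitary R := by
  obtain ⟨h₁, h₂⟩ := Unitary.mem_iff.1 hu
  rw [Unitary.mem_iff, star_extendByOne, extendByOne_mul_extendByOne hY,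
    extendByOne_mul_extendByOne hY, h₁, h₂]
  simp [extendByOne]

end ExtendByOne

section Cayley

/-- The scalar Cayley transform of `α z`, which maps the real line into the unit circle. -/
noncomputable def cayleyFun (α : ℝ) (z : ℂ) : ℂ :=
  (1 + Complex.I * α * z) / (1 - Complex.I * α * z)

/-- The Cayley transform `(1 + i α T) (1 - i α T)⁻¹` of `α T`, defined through the functional
calculus; it is meaningful for self-adjoint `T`, where the denominator is invertible. -/
noncomputable def cayleyTransform {A : Type*} [CStarAlgebra A] (T : A) (α : ℝ) : A :=
  cfc (cayleyFun α) T

theorem one_sub_I_mul_ne_zero {z : ℂ} (hz : z.im = 0) (α : ℝ) : 1 - Complex.I * α * z ≠ 0 :=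
  fun h => by simpa [hz] using congrArg Complex.re h

theorem star_cayleyFun_mul_cayleyFun {z : ℂ} (hz : z.im = 0) (α : ℝ) :
    star (cayleyFun α z) * cayleyFun α z = 1 := by
  have hconj : (starRingEnd ℂ) z = z := Complex.conj_eq_iff_im.2 hz
  have h₁ := one_sub_I_mul_ne_zero hz α
  have h₂ : 1 + Complex.I * α * z ≠ 0 := by simpa using one_sub_I_mul_ne_zero hz (-α)
  simp only [cayleyFun, Complex.star_def, map_div₀, map_add, map_sub, map_mul, map_one,
    Complex.conj_I, Complex.conj_ofReal, hconj, neg_mul, sub_neg_eq_add, ← sub_eq_add_neg]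
  field_simp

theorem cayleyFun_sub_cayleyFun {z : ℂ} (hz : z.im = 0) (α β : ℝ) :
    cayleyFun α z - cayleyFun β z =
      2 * Complex.I * (α - β) * z / ((1 - Complex.I * α * z) * (1 - Complex.I * β * z)) := by
  rw [cayleyFun, cayleyFun,
    div_sub_div _ _ (one_sub_I_mul_ne_zero hz α) (one_sub_I_mul_ne_zero hz β)]
  congr 1
  ring

variable {A : Type*} [CStarAlgebra A] {T : A}

theorem continuousOn_cayleyFun (hT : IsSelfAdjoint T) (α : ℝ) :
    ContinuousOn (cayleyFun α) (spectrum ℂ T) :=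
  ContinuousOn.div (by fun_prop) (by fun_prop)
    fun _ hz => one_sub_I_mul_ne_zero (hT.im_eq_zero_of_mem_spectrum hz) α

theorem cayleyTransform_mem_unitary (hT : IsSelfAdjoint T) (α : ℝ) :
    cayleyTransform T α ∈ unitary A :=
  (cfc_unitary_iff _ T hT.isStarNormal (continuousOn_cayleyFun hT α)).2
    fun _ hz => star_cayleyFun_mul_cayleyFun (hT.im_eq_zero_of_mem_spectrum hz) α

theorem cayleyTransform_zero (hT : IsSelfAdjoint T) : cayleyTransform T 0 = 1 := by
  have := hT.isStarNormal
  have h : cayleyFun 0 = fun _ => 1 := by ext; simp [cayleyFun]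
  rw [cayleyTransform, h, cfc_const_one ℂ T]

theorem cayleyTransform_sub_cayleyTransform (hT : IsSelfAdjoint T) (α β : ℝ) :
    cayleyTransform T α - cayleyTransform T β = cfc (fun z => cayleyFun α z - cayleyFun β z) T :=
  (cfc_sub _ _ T (continuousOn_cayleyFun hT α) (continuousOn_cayleyFun hT β)).symm

theorem exists_cayleyTransform_sub_eq_mul (hT : IsSelfAdjoint T) (α β : ℝ) :
    ∃ R, cayleyTransform T α - cayleyTransform T β = R * T := by
  have := hT.isStarNormal
  let k (z : ℂ) := 2 * Complex.I * (α - β) / ((1 - Complex.I * α * z) * (1 - Complex.I * β * z))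
  have hk : ContinuousOn k (spectrum ℂ T) :=
    ContinuousOn.div (by fun_prop) (by fun_prop) fun z hz =>
      have him := hT.im_eq_zero_of_mem_spectrum hz
      mul_ne_zero (one_sub_I_mul_ne_zero him α) (one_sub_I_mul_ne_zero him β)
  refine ⟨cfc k T, ?_⟩
  calc cayleyTransform T α - cayleyTransform T β
      = cfc (fun z => k z * z) T := by
        rw [cayleyTransform_sub_cayleyTransform hT]
        refine cfc_congr fun z hz => ?_
        simp only [k, cayleyFun_sub_cayleyFun (hT.im_eq_zero_of_mem_spectrum hz)]
        rw [div_mul_eq_mul_div]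
    _ = cfc k T * T := by rw [cfc_mul _ _ T hk (by fun_prop), cfc_id' ℂ T]

theorem exists_eq_mul_cayleyTransform_sub (hT : IsSelfAdjoint T) {α β : ℝ} (h : α ≠ β) :
    ∃ R, T = R * (cayleyTransform T α - cayleyTransform T β) := by
  have := hT.isStarNormal
  let k (z : ℂ) := (1 - Complex.I * α * z) * (1 - Complex.I * β * z) / (2 * Complex.I * (α - β))
  have hαβ : 2 * Complex.I * (α - β) ≠ 0 := mul_ne_zero
    (mul_ne_zero two_ne_zero Complex.I_ne_zero) (sub_ne_zero.2 (Complex.ofReal_injective.ne h))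
  refine ⟨cfc k T, ?_⟩
  calc T = cfc (fun z => k z * (cayleyFun α z - cayleyFun β z)) T := by
        conv_lhs => rw [← cfc_id' ℂ T]
        refine cfc_congr fun z hz => ?_
        have him := hT.im_eq_zero_of_mem_spectrum hz
        have hden := mul_ne_zero (one_sub_I_mul_ne_zero him α) (one_sub_I_mul_ne_zero him β)
        simp only [k, cayleyFun_sub_cayleyFun him]
        rw [div_mul_div_comm, eq_div_iff (mul_ne_zero hαβ hden)]
        ring
    _ = cfc k T * (cayleyTransform T α - cayleyTransform T β) := by
        rw [cayleyTransform_sub_cayleyTransform hT,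
          cfc_mul k (fun z => cayleyFun α z - cayleyFun β z) T (by fun_prop)
            ((continuousOn_cayleyFun hT α).sub (continuousOn_cayleyFun hT β))]

end Cayley

end Unitaries

section Conjugacy

theorem exists_conj_eq_of_conj_image_eq {R : Type*} [Semiring R] [StarRing R] {I C : Set R}
    {V W₁ W₂ A : R} (hW₂ : star W₂ * W₂ = 1)
    (himage : (fun T => V * T * star V) '' ((fun T => W₁ * T * star W₁) '' C ∩ I) =
      (fun T => W₂ * T * star W₂) '' C ∩ I) (hAC : A ∈ C) (hAI : W₂ * A * star W₂ ∈ I) :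
    ∃ B ∈ C, star W₂ * V * W₁ * B * star (star W₂ * V * W₁) = A := by
  have hmem : W₂ * A * star W₂ ∈ (fun T => W₂ * T * star W₂) '' C ∩ I := ⟨⟨A, hAC, rfl⟩, hAI⟩
  rw [← himage] at hmem
  obtain ⟨_, ⟨⟨B, hB, rfl⟩, -⟩, (hBA : V * (W₁ * B * star W₁) * star V = _)⟩ := hmem
  refine ⟨B, hB, ?_⟩
  calc star W₂ * V * W₁ * B * star (star W₂ * V * W₁)
      = star W₂ * (V * (W₁ * B * star W₁) * star V) * W₂ := by
        simp only [star_mul, star_star, mul_assoc]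
    _ = (star W₂ * W₂) * A * (star W₂ * W₂) := by rw [hBA]; simp only [mul_assoc]
    _ = A := by rw [hW₂, one_mul, mul_one]

theorem isUnit_one_add_smul_sub_one {A : Type*} [CStarAlgebra A] {v : A} (hv : v ∈ unitary A)
    {c : ℂ} (hc : ‖c‖ < 1 / 2) : IsUnit (1 + c • (v - 1)) := by
  rcases subsingleton_or_nontrivial A with _ | _
  · exact isUnit_of_subsingleton _
  have hv₂ : ‖v - 1‖ ≤ 2 := by
    calc ‖v - 1‖ ≤ ‖v‖ + ‖(1 : A)‖ := norm_sub_le v 1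
      _ = 2 := by rw [CStarRing.norm_of_mem_unitary hv, norm_one]; norm_num
  have hlt : ‖(-c) • (v - 1)‖ < 1 := by
    calc ‖(-c) • (v - 1)‖ = ‖c‖ * ‖v - 1‖ := by rw [norm_smul, norm_neg]
      _ ≤ ‖c‖ * 2 := by gcongr
      _ < 1 := by linarith
  simpa using isUnit_one_sub_of_norm_lt_one hlt

theorem exists_isometry_star_mul_eq_smul {R : Type*} [Ring R] [StarRing R] [Algebra ℂ R]
    [StarModule ℂ R] {S₀ S₁ : R} {a b : ℂ} (h₀ : star S₀ * S₀ = 1) (h₁ : star S₁ * S₁ = 1)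
    (h₁₀ : star S₁ * S₀ = 0) (hab : star a * a + star b * b = 1) :
    ∃ Y : R, star Y * Y = 1 ∧ star S₀ * Y = a • 1 ∧ star S₁ * Y = b • 1 := by
  have h₀₁ : star S₀ * S₁ = 0 := by simpa using congrArg star h₁₀
  refine ⟨a • S₀ + b • S₁, ?_, ?_, ?_⟩
  · simp only [star_add, star_smul, add_mul, mul_add, smul_mul_smul_comm, h₀, h₁, h₀₁, h₁₀,
      smul_zero, add_zero, zero_add]
    rw [← add_smul, hab, one_smul]
  · simp only [mul_add, mul_smul_comm, h₀, h₀₁, smul_zero, add_zero]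
  · simp only [mul_add, mul_smul_comm, h₁, h₁₀, smul_zero, zero_add]

variable {H : Type*} [NormedAddCommGroup H] [InnerProductSpace ℂ H] [CompleteSpace H]
  {I C : Set (H →L[ℂ] H)} {S₀ S₁ Y U w v : H →L[ℂ] H} {a b : ℂ}

namespace IsOperatorIdeal

theorem extendByOne_cayleyTransform_sub_one_mem (hI : IsOperatorIdeal I) {T : H →L[ℂ] H}
    (hT : T ∈ I) (hTsa : IsSelfAdjoint T) (Y : H →L[ℂ] H) (α : ℝ) :
    extendByOne Y (cayleyTransform T α) - 1 ∈ I := by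
  obtain ⟨R, hR⟩ := exists_cayleyTransform_sub_eq_mul hTsa α 0
  rw [cayleyTransform_zero hTsa] at hR
  rw [extendByOne, add_sub_cancel_left, hR]
  exact hI.mul_mem_right _ (hI.mul_mem_left _ (hI.mul_mem_left _ hT))

/-- If `Z = U S₀ S₀* U*` commutes with `S₀ S₀*`, then `S₁* Z S₀ = 0`, which modulo `I` is the
product of the two corners of `w`. -/
theorem corner_mul_star_corner_mem (hI : IsOperatorIdeal I) (h₀ : star S₀ * S₀ = 1)
    (h₁₀ : star S₁ * S₀ = 0)
    (hU : Commute (U * (S₀ * star S₀) * star U) (S₀ * star S₀)) (hwU : w - U ∈ I) :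
    star S₁ * w * S₀ * star (star S₀ * w * S₀) ∈ I := by
  have hzero : star S₁ * U * S₀ * star (star S₀ * U * S₀) = 0 := by
    calc star S₁ * U * S₀ * star (star S₀ * U * S₀)
        = star S₁ * (U * (S₀ * star S₀) * star U * (S₀ * star S₀)) * S₀ := by
          simp only [star_mul, star_star, mul_assoc, h₀, mul_one]
      _ = star S₁ * S₀ * (star S₀ * (U * (S₀ * star S₀) * star U) * S₀) := by
          rw [hU.eq]; simp only [mul_assoc]
      _ = 0 := by rw [h₁₀, zero_mul]
  have hcorner (S : H →L[ℂ] H) : star S * w * S₀ - star S * U * S₀ ∈ I := by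
    rw [← sub_mul, ← mul_sub]
    exact hI.mul_mem_right _ (hI.mul_mem_left _ hwU)
  have hcorner₀ := hI.star_mem (hcorner S₀)
  rw [star_sub] at hcorner₀
  have hprod := hI.mul_sub_mul_mem (hcorner S₁) hcorner₀
  rwa [hzero, sub_zero] at hprod

/-- The `S₁, S₀` corner of `extendByOne Y v` is a multiple of `v - 1`, while its `S₀, S₀` corner
`1 + |a| ^ 2 (v - 1)` is invertible because `|a| ^ 2 < 1 / 2`. -/
theorem sub_one_mem_of_commute_conj (hI : IsOperatorIdeal I) (h₀ : star S₀ * S₀ = 1)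
    (h₁₀ : star S₁ * S₀ = 0) (hY₀ : star S₀ * Y = a • 1) (hY₁ : star S₁ * Y = b • 1) (ha : a ≠ 0)
    (hb : b ≠ 0) (ha' : ‖a‖ ^ 2 < 1 / 2) (hv : v ∈ unitary (H →L[ℂ] H))
    (hU : Commute (U * (S₀ * star S₀) * star U) (S₀ * star S₀))
    (hvU : extendByOne Y v - U ∈ I) : v - 1 ∈ I := by
  have hY₀' : star Y * S₀ = star a • 1 := by simpa using congrArg star hY₀
  have hcorner (S : H →L[ℂ] H) : star S * extendByOne Y v * S₀ =
      star S * S₀ + star S * Y * (v - 1) * (star Y * S₀) := by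
    simp only [extendByOne, mul_add, add_mul, mul_one, mul_assoc]
  have hmem := hI.corner_mul_star_corner_mem h₀ h₁₀ hU hvU
  rw [hcorner, hcorner, h₀, h₁₀, hY₀, hY₁, hY₀', zero_add] at hmem
  simp only [smul_mul_assoc, mul_smul_comm, one_mul, mul_one, smul_smul] at hmem
  have hnorm : ‖star a * a‖ < 1 / 2 := by rwa [norm_mul, norm_star, ← sq]
  obtain ⟨D, hD⟩ := (isUnit_one_add_smul_sub_one hv hnorm).star
  have hmem' := hI.smul_mem (star a * b)⁻¹ (hI.mul_mem_right ↑D⁻¹ hmem)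
  have hab : star a * b ≠ 0 := mul_ne_zero (star_ne_zero.2 ha) hb
  rwa [← hD, smul_mul_assoc, mul_assoc, D.mul_inv, mul_one, inv_smul_smul₀ hab] at hmem'

theorem sub_mem_of_conj_image_eq {ι : Type*} {e : HilbertBasis ι ℂ H} {u₁ u₂ V : H →L[ℂ] H}
    (hI : IsOperatorIdeal I) (h₀ : star S₀ * S₀ = 1) (h₁₀ : star S₁ * S₀ = 0)
    (hS₀ : IsDiag e (S₀ * star S₀)) (hY : star Y * Y = 1) (hY₀ : star S₀ * Y = a • 1)
    (hY₁ : star S₁ * Y = b • 1) (ha : a ≠ 0) (hb : b ≠ 0) (ha' : ‖a‖ ^ 2 < 1 / 2)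
    (hC : ∀ A ∈ C, IsDiag e A)
    (heC : ∀ i, rankOne ℂ (e i) (e i) ∈ C) (heI : ∀ i, rankOne ℂ (e i) (e i) ∈ I)
    (hu₁ : u₁ ∈ unitary (H →L[ℂ] H)) (hu₂ : u₂ ∈ unitary (H →L[ℂ] H))
    (hV : V ∈ unitary (H →L[ℂ] H)) (hVI : V - 1 ∈ I)
    (himage : (fun T => V * T * star V) ''
        ((fun T => extendByOne Y u₁ * T * star (extendByOne Y u₁)) '' C ∩ I) =
      (fun T => extendByOne Y u₂ * T * star (extendByOne Y u₂)) '' C ∩ I) : u₁ - u₂ ∈ I := by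
  set W₁ := extendByOne Y u₁ with hW₁
  set W₂ := extendByOne Y u₂ with hW₂
  have hW₁u : W₁ ∈ unitary (H →L[ℂ] H) := extendByOne_mem_unitary hY hu₁
  have hW₂u : W₂ ∈ unitary (H →L[ℂ] H) := extendByOne_mem_unitary hY hu₂
  let U := star W₂ * V * W₁
  have hU : star U * U = 1 := (mul_mem (mul_mem (Unitary.star_mem hW₂u) hV) hW₁u).1
  have hUdiag : IsDiag e (U * (S₀ * star S₀) * star U) :=
    hS₀.conj_of_rankOne_mem hC hU fun i => exists_conj_eq_of_conj_image_eq hW₂u.1 himage (heC i)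
      (hI.mul_mem_right _ (hI.mul_mem_left _ (heI i)))
  have hwU : extendByOne Y (star u₂ * u₁) - U ∈ I := by
    have hw : extendByOne Y (star u₂ * u₁) - U = (-1 : ℂ) • (star W₂ * (V - 1) * W₁) := by
      rw [← extendByOne_mul_extendByOne hY, ← star_extendByOne, ← hW₁, ← hW₂, mul_sub, sub_mul,
        mul_one, neg_one_smul, neg_sub]
    rw [hw]
    exact hI.smul_mem _ (hI.mul_mem_right _ (hI.mul_mem_left _ hVI))
  have hmem : star u₂ * u₁ - 1 ∈ I := hI.sub_one_mem_of_commute_conj h₀ h₁₀ hY₀ hY₁ ha hb ha'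
    (mul_mem (Unitary.star_mem hu₂) hu₁) (hUdiag.commute hS₀) hwU
  have hsub : u₁ - u₂ = u₂ * (star u₂ * u₁ - 1) := by
    rw [mul_sub, ← mul_assoc, hu₂.2, one_mul, mul_one]
  exact hsub ▸ hI.mul_mem_left _ hmem

end IsOperatorIdeal

end Conjugacy

theorem orbit_partitions_into_uncountably_many_conjugacy_classes_general
    {H : Type*} [NormedAddCommGroup H] [InnerProductSpace ℂ H] [CompleteSpace H]
    (b : HilbertBasis ℕ ℂ H)
    (I J : Set (H →L[ℂ] H))
    (hI : IsOperatorIdeal I) (hJ : IsOperatorIdeal J)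
    (hInz : ∃ T ∈ I, T ≠ (0 : H →L[ℂ] H))
    (hIltJ : ∃ T ∈ J, T ∉ I)
    (hJproper : ∃ T : H →L[ℂ] H, T ∉ J)
    (C₀ : Set (H →L[ℂ] H)) (hC₀ : IsCartanSubalgebra J C₀) :
    ∃ C : ℝ → Set (H →L[ℂ] H),
      (∀ α, ∃ W : H →L[ℂ] H, W ∈ unitary (H →L[ℂ] H) ∧ W - 1 ∈ J ∧
          (fun T : H →L[ℂ] H => W * T * star W) '' C₀ = C α) ∧
      (∀ α β, α ≠ β →
        ¬ ∃ W : H →L[ℂ] H, W ∈ unitary (H →L[ℂ] H) ∧ W - 1 ∈ I ∧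
          (fun T : H →L[ℂ] H => W * T * star W) '' (C α ∩ I) = C β ∩ I) := by
  obtain ⟨s, e, hdiag⟩ := hC₀.exists_isDiag fun T => hJ.isCompactOperator b hJproper
  obtain ⟨T, hTJ, hTI⟩ := hIltJ
  have heC := hC₀.rankOne_mem hJ ⟨T, hTJ, fun h => hTI (h ▸ hI.1)⟩ hdiag
  have : Infinite s := infinite_of_hilbertBasis b e
  obtain ⟨S₀, S₁, h₀, h₁, h₁₀, hS₀⟩ := exists_isometries_isDiag e
  obtain ⟨Y, hY, hY₀, hY₁⟩ := exists_isometry_star_mul_eq_smul (a := 3 / 5) (b := 4 / 5) h₀ h₁ h₁₀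
    (by norm_num)
  have habs : IsSelfAdjoint (CFC.abs T) := (CFC.abs_nonneg T).isSelfAdjoint
  let u := cayleyTransform (CFC.abs T)
  have hu (α : ℝ) : u α ∈ unitary (H →L[ℂ] H) := cayleyTransform_mem_unitary habs α
  refine ⟨fun α => (fun X => extendByOne Y (u α) * X * star (extendByOne Y (u α))) '' C₀,
    fun α => ⟨_, extendByOne_mem_unitary hY (hu α),
      hJ.extendByOne_cayleyTransform_sub_one_mem (hJ.cfcAbs_mem_iff.2 hTJ) habs Y α, rfl⟩, ?_⟩
  rintro α β hαβ ⟨V, hV, hVI, himage⟩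
  obtain ⟨R, hR⟩ := exists_eq_mul_cayleyTransform_sub habs hαβ
  refine hTI (hI.cfcAbs_mem_iff.1 (hR ▸ hI.mul_mem_left R ?_))
  exact hI.sub_mem_of_conj_image_eq h₀ h₁₀ hS₀ hY hY₀ hY₁ (by norm_num) (by norm_num)
    (by norm_num) hdiag heC (fun i => hI.rankOne_mem hInz _ _) (hu α) (hu β) hV hVI himage

/-- Let `{0} ⊊ I ⊊ J ⊊ B(H)` be operator ideals, and let `C₀` be a Cartan
subalgebra of `J` with `U_J(H)`-conjugacy class `O`.  Then there is an uncountable family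
`(C_α)_{α ∈ (0,1]}` of members of `O` such that the Cartan subalgebras `C_α ∩ I` of `I` are
pairwise not `U_I(H)`-conjugate; consequently `{C ∩ I : C ∈ O}` partitions into uncountably
many `U_I(H)`-conjugacy classes of Cartan subalgebras of `I`. -/
theorem orbit_partitions_into_uncountably_many_conjugacy_classes
    {H : Type*} [NormedAddCommGroup H] [InnerProductSpace ℂ H] [CompleteSpace H]
    (b : HilbertBasis ℕ ℂ H)
    (I J : Set (H →L[ℂ] H))
    (hI : IsOperatorIdeal I) (hJ : IsOperatorIdeal J)
    (hIJ : I ⊆ J)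
    (hInz : ∃ T ∈ I, T ≠ (0 : H →L[ℂ] H))
    (hIltJ : ∃ T ∈ J, T ∉ I)
    (hJproper : ∃ T : H →L[ℂ] H, T ∉ J)
    (C₀ : Set (H →L[ℂ] H)) (hC₀ : IsCartanSubalgebra J C₀) :
    ∃ C : ℝ → Set (H →L[ℂ] H),
      (∀ α ∈ Ioc (0 : ℝ) 1,
        ∃ W : H →L[ℂ] H, W ∈ unitary (H →L[ℂ] H) ∧ W - 1 ∈ J ∧
          (fun T : H →L[ℂ] H => W * T * star W) '' C₀ = C α) ∧
      (∀ α ∈ Ioc (0 : ℝ) 1, ∀ β ∈ Ioc (0 : ℝ) 1, α ≠ β →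
        ¬ ∃ W : H →L[ℂ] H, W ∈ unitary (H →L[ℂ] H) ∧ W - 1 ∈ I ∧
          (fun T : H →L[ℂ] H => W * T * star W) '' (C α ∩ I) = C β ∩ I) := by
  obtain ⟨C, hconj, hne⟩ := orbit_partitions_into_uncountably_many_conjugacy_classes_general
    b I J hI hJ hInz hIltJ hJproper C₀ hC₀
  exact ⟨C, fun α _ => hconj α, fun α _ β _ => hne α β⟩
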